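/- Let A = diag(κ₁,…,κₙ) be a real diagonal n×n matrix, with Newton transformations P_k. Then for every 0 ≤ k ≤ n−1, P_k is the diagonal matrix diag(μ_{1,k},…,μ_{n,k}), where μ_{i,k} = (−1)^k · ∑_{i₁<⋯<i_k, i_j ≠ i} κ_{i₁}⋯κ_{i_k} = (−1)^k · σ_k((κ_l)_{l ≠ i}), the k-th elementary symmetric polynomial of the κ_l with the i-th entry omitted, multiplied by (−1)^k. -/

import Mathlib

/-- The `k`-th elementary symmetric function of `κ₁, …, κₙ`:
`S_k = σ_k(κ₁,…,κₙ)` (with `S_0 = 1`). -/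
noncomputable def Ssym (n : ℕ) (κ : Fin n → ℝ) (k : ℕ) : ℝ :=
  ∑ t ∈ (Finset.univ : Finset (Fin n)).powersetCard k, ∏ i ∈ t, κ i

/-- The `k`-th mean curvature `H_k`, defined by `binom(n,k)·H_k = (−1)^k·S_k`
(so `H_k = 0` for `k > n`). -/
noncomputable def Hmc (n : ℕ) (κ : Fin n → ℝ) (k : ℕ) : ℝ :=
  (-1 : ℝ) ^ k * Ssym n κ k / (n.choose k : ℝ)

/-- The Newton transformations, defined inductively by `P_0 = I` and
`P_k = binom(n,k)·H_k·I + A·P_{k−1}`. -/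
noncomputable def NewtonT (n : ℕ) (κ : Fin n → ℝ) (A : Matrix (Fin n) (Fin n) ℝ) :
    ℕ → Matrix (Fin n) (Fin n) ℝ
  | 0 => 1
  | k + 1 => ((n.choose (k + 1) : ℝ) * Hmc n κ (k + 1)) • (1 : Matrix (Fin n) (Fin n) ℝ)
      + A * NewtonT n κ A k

/-- The `k`-th elementary symmetric polynomial of the values `κ l` for `l` in the
finite index set `s`. -/
noncomputable def esymmOn {n : ℕ} (s : Finset (Fin n)) (k : ℕ) (κ : Fin n → ℝ) : ℝ :=
  ∑ t ∈ s.powersetCard k, ∏ i ∈ t, κ i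

lemma Ssym_succ_aux {n : ℕ} (κ : Fin n → ℝ) (k : ℕ) (i : Fin n) :
    Ssym n κ (k + 1) = esymmOn (Finset.univ.erase i) (k + 1) κ
      + κ i * esymmOn (Finset.univ.erase i) k κ := by
  have hi : i ∉ Finset.univ.erase i := Finset.notMem_erase _ _
  have hmem : ∀ {m : ℕ} {t : Finset (Fin n)},
      t ∈ (Finset.univ.erase i).powersetCard m → i ∉ t := by
    intro m t ht h
    exact hi ((Finset.mem_powersetCard.1 ht).1 h)
  unfold Ssym esymmOn
  rw [← Finset.insert_erase (Finset.mem_univ i), Finset.powersetCard_succ_insert hi,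
    Finset.sum_union, Finset.sum_image, Finset.mul_sum, Finset.insert_erase (Finset.mem_univ i)]
  · congr 1
    exact Finset.sum_congr rfl fun t ht => Finset.prod_insert (hmem ht)
  · intro s hs t ht h
    have h' : insert i s = insert i t := h
    rw [← Finset.erase_insert (hmem hs), h', Finset.erase_insert (hmem ht)]
  · rw [Finset.disjoint_left]
    intro t ht h
    obtain ⟨u, -, rfl⟩ := Finset.mem_image.1 h
    exact hmem ht (Finset.mem_insert_self _ _)

/-- For `A = diag(κ₁,…,κₙ)` a real diagonal `n×n` matrix and `0 ≤ k ≤ n−1`, the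
Newton transformation `P_k` is the diagonal matrix `diag(μ_{1,k},…,μ_{n,k})` with
`μ_{i,k} = (−1)^k · σ_k((κ_l)_{l ≠ i})`. -/
theorem stmt5 {n : ℕ} (hn : 1 ≤ n) (κ : Fin n → ℝ) (k : ℕ) (hk : k ≤ n - 1) :
    NewtonT n κ (Matrix.diagonal κ) k
      = Matrix.diagonal (fun i => (-1 : ℝ) ^ k * esymmOn (Finset.univ.erase i) k κ) := by
  induction k with
  | zero => simp [NewtonT, esymmOn]
  | succ k ih =>
    have hc : (n.choose (k + 1) : ℝ) ≠ 0 := by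
      exact_mod_cast (Nat.choose_pos (by omega)).ne'
    rw [NewtonT, ih (by omega), Matrix.diagonal_mul_diagonal, Matrix.smul_one_eq_diagonal,
      Matrix.diagonal_add]
    congr 1
    funext i
    rw [Hmc, mul_div_cancel₀ _ hc, Ssym_succ_aux κ k i]
    ring
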